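/- Let ℓ ∈ ℕ, let ℰ : ℕ → Finset ℕ, and let Γ and Γℓ be finite sets of literals such that every element of Γ has the form (j, true, n) with j ≠ ℓ and n ∈ ℰ j, and every element of Γℓ has the form (ℓ, true, n) with n ∈ ℰ ℓ. If D ℰ α (Γ ∪ Γℓ) holds for an ordinal α, then D ℰ α Γ holds or D ℰ α Γℓ holds. (Lemma 1.) -/

import Mathlib

/-!
The proof is by induction on the derivation. The first two rules are immediate. For a progress
inference with main literal `E_i(m)`, suppose `i ≠ ℓ`, so that `E_i(m)` lies in `Γ`; the case
`i = ℓ` is symmetric. The induction hypothesis splits every premise. If the `Γ`-part of each premise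
is derivable, the same inference derives `Γ`. Otherwise `Γℓ` is derivable from the updated family,
which differs from `ℰ` at `i` only. As `Γℓ` has no literal of index `i`, that change is irrelevant
(`D.congr_family`) and `Γℓ` is already derivable from `ℰ`.
-/

open Ordinal

/-- The fragment of the calculus `Diag(P,∅)+(prg)^∅` acting on sequents of `E`-literals:
a triple `(j, true, n)` represents the positive literal `E_j(n)` and `(j, false, n)` the
negative literal `Ē_j(n)`. -/
inductive D (R : ℕ → ℕ → ℕ → Prop) :
    (ℕ → Finset ℕ) → Ordinal → Finset (ℕ × Bool × ℕ) → Prop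
  | ax {ℰ : ℕ → Finset ℕ} {β : Ordinal} {Γ : Finset (ℕ × Bool × ℕ)} (j n : ℕ)
      (h : (j, false, n) ∈ Γ) : D R ℰ β Γ
  | rep {ℰ : ℕ → Finset ℕ} {β : Ordinal} {Γ : Finset (ℕ × Bool × ℕ)} (γ : Ordinal)
      (hγ : γ < β) (hd : D R ℰ γ Γ) : D R ℰ β Γ
  | prg {ℰ : ℕ → Finset ℕ} {β : Ordinal} {Γ : Finset (ℕ × Bool × ℕ)} (i m : ℕ)
      (hm : (i, true, m) ∈ Γ) (hℰ : m ∈ ℰ i) (β₀ : Ordinal) (hβ₀ : β₀ < β)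
      (h : ∀ n, Relation.TransGen (R i) n m →
        D R (Function.update ℰ i (insert n (ℰ i))) β₀ (insert (i, true, n) Γ)) :
      D R ℰ β Γ

/-- Derivability depends on the family `ℰ` only at the indices of positive literals of the sequent:
a progress inference reads and changes `ℰ` only at the index of its main literal, and introduces
no new index into the sequent. -/
theorem D.congr_family {R : ℕ → ℕ → ℕ → Prop} {ℰ : ℕ → Finset ℕ} {β : Ordinal}
    {Γ : Finset (ℕ × Bool × ℕ)} (h : D R ℰ β Γ) :
    ∀ ℰ' : ℕ → Finset ℕ, (∀ j n, (j, true, n) ∈ Γ → ℰ' j = ℰ j) → D R ℰ' β Γ := by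
  induction h with
  | ax j n h => exact fun _ _ => D.ax j n h
  | rep γ hγ _ ih => exact fun ℰ' h' => D.rep γ hγ (ih ℰ' h')
  | @prg ℰ β Γ i m hm hℰ β₀ hβ₀ _ ih =>
    intro ℰ' h'
    have hi := h' i m hm
    refine D.prg i m hm (hi ▸ hℰ) β₀ hβ₀ fun n hn => ih n hn _ fun j k hk => ?_
    rcases eq_or_ne j i with rfl | hj
    · simp [hi]
    · simp only [Function.update_of_ne hj]
      refine h' j k ((Finset.mem_insert.1 hk).resolve_left fun e => hj ?_)
      exact congrArg Prod.fst e

/-- The progress case of the splitting argument, with `Γ` the part containing the main literal and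
`Δ` the other part: either each premise keeps its `Γ`-part derivable, or some premise yields `Δ`,
in which the index `i` does not occur. -/
theorem D.prg_or {R : ℕ → ℕ → ℕ → Prop} {ℰ : ℕ → Finset ℕ} {β β₀ : Ordinal}
    {Γ Δ : Finset (ℕ × Bool × ℕ)} {i m : ℕ} (hm : (i, true, m) ∈ Γ) (hℰ : m ∈ ℰ i)
    (hβ₀ : β₀ < β) (hΔ : ∀ x ∈ Δ, x.1 ≠ i)
    (h : ∀ n, Relation.TransGen (R i) n m →
      D R (Function.update ℰ i (insert n (ℰ i))) β₀ (insert (i, true, n) Γ) ∨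
        D R (Function.update ℰ i (insert n (ℰ i))) β₀ Δ) :
    D R ℰ β Γ ∨ D R ℰ β Δ := by
  by_cases hex : ∃ n, D R (Function.update ℰ i (insert n (ℰ i))) β₀ Δ
  · obtain ⟨n, hn⟩ := hex
    exact Or.inr (D.rep β₀ hβ₀ (hn.congr_family ℰ fun j k hk =>
      (Function.update_of_ne (hΔ _ hk) _ _).symm))
  · exact Or.inl (D.prg i m hm hℰ β₀ hβ₀ fun n hn =>
      (h n hn).resolve_right fun hd => hex ⟨n, hd⟩)

/-- Splitting a derivable sequent by index. The parts are constrained only through the indices of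
their literals, a condition that, unlike membership in `ℰ`, does not mention the changing family. -/
theorem D.split {R : ℕ → ℕ → ℕ → Prop} {ℓ : ℕ} {ℰ : ℕ → Finset ℕ} {β : Ordinal}
    {Λ : Finset (ℕ × Bool × ℕ)} (h : D R ℰ β Λ) :
    ∀ Γ Δ : Finset (ℕ × Bool × ℕ), (∀ x ∈ Γ, x.1 ≠ ℓ) → (∀ x ∈ Δ, x.1 = ℓ) → Λ = Γ ∪ Δ →
      D R ℰ β Γ ∨ D R ℰ β Δ := by
  induction h with
  | ax j n h =>
    rintro Γ Δ - - rfl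
    exact (Finset.mem_union.1 h).imp (D.ax j n) (D.ax j n)
  | rep γ hγ _ ih =>
    exact fun Γ Δ hΓ hΔ e => (ih Γ Δ hΓ hΔ e).imp (D.rep γ hγ) (D.rep γ hγ)
  | @prg ℰ β Λ i m hm hℰ β₀ hβ₀ _ ih =>
    rintro Γ Δ hΓ hΔ rfl
    rcases Finset.mem_union.1 hm with hm | hm
    · have hi : i ≠ ℓ := hΓ _ hm
      refine D.prg_or hm hℰ hβ₀ (fun x hx e => hi (e ▸ hΔ x hx)) fun n hn =>
        ih n hn _ Δ ?_ hΔ (Finset.insert_union _ _ _).symm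
      exact Finset.forall_mem_insert _ _ _ |>.2 ⟨hi, hΓ⟩
    · have hi : i = ℓ := hΔ _ hm
      refine (D.prg_or hm hℰ hβ₀ (fun x hx e => hΓ x hx (e.trans hi)) fun n hn =>
        (ih n hn Γ _ hΓ ?_ (Finset.union_insert _ _ _).symm).symm).symm
      exact Finset.forall_mem_insert _ _ _ |>.2 ⟨hi, hΔ⟩

/-- Lemma 1: a derivable sequent splitting into the part `Γ` (literals `E_j(n)`, `j ≠ ℓ`,
`n ∈ ℰ j`) and the part `Γℓ` (literals `E_ℓ(n)`, `n ∈ ℰ ℓ`) has a derivable part. -/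
theorem derivable_split (R : ℕ → ℕ → ℕ → Prop) (ℓ : ℕ) (ℰ : ℕ → Finset ℕ)
    (Γ Γℓ : Finset (ℕ × Bool × ℕ))
    (hΓ : ∀ x ∈ Γ, ∃ j n, j ≠ ℓ ∧ n ∈ ℰ j ∧ x = (j, true, n))
    (hΓℓ : ∀ x ∈ Γℓ, ∃ n, n ∈ ℰ ℓ ∧ x = (ℓ, true, n))
    (α : Ordinal) (h : D R ℰ α (Γ ∪ Γℓ)) :
    D R ℰ α Γ ∨ D R ℰ α Γℓ := by
  refine h.split (ℓ := ℓ) Γ Γℓ (fun x hx => ?_) (fun x hx => ?_) rfl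
  · obtain ⟨j, n, hj, -, rfl⟩ := hΓ x hx
    exact hj
  · obtain ⟨n, -, rfl⟩ := hΓℓ x hx
    rfl
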